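/- Let r : Y → [-1, 1] be a reward function, B = max_{y∈Y} ‖φ(y)‖, and Z ⊆ Y. If θ_t evolves by gradient flow maximizing the expected reward V from initial parameters θ_0, then for all t ≥ 0, π_{θ_t}(Z) ≤ π_{θ_0}(Z) · exp(4 B² t). -/

import Mathlib

open scoped BigOperators RealInnerProductSpace

noncomputable def policy {Y : Type*} [Fintype Y] {D : ℕ}
    (φ : Y → EuclideanSpace ℝ (Fin D)) (θ : EuclideanSpace ℝ (Fin D)) (y : Y) : ℝ :=
  Real.exp ⟪φ y, θ⟫ / ∑ z, Real.exp ⟪φ z, θ⟫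

noncomputable def expReward {Y : Type*} [Fintype Y] {D : ℕ}
    (φ : Y → EuclideanSpace ℝ (Fin D)) (r : Y → ℝ) (θ : EuclideanSpace ℝ (Fin D)) : ℝ :=
  ∑ y, policy φ θ y * r y

lemma aux_pos {Y : Type*} [Fintype Y] [Nonempty Y] {D : ℕ}
    (φ : Y → EuclideanSpace ℝ (Fin D)) (θ : EuclideanSpace ℝ (Fin D)) :
    0 < ∑ z, Real.exp ⟪φ z, θ⟫ :=
  Finset.sum_pos (fun _ _ => Real.exp_pos _) Finset.univ_nonempty

lemma policy_pos' {Y : Type*} [Fintype Y] [Nonempty Y] {D : ℕ}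
    (φ : Y → EuclideanSpace ℝ (Fin D)) (θ : EuclideanSpace ℝ (Fin D)) (y : Y) :
    0 < policy φ θ y := div_pos (Real.exp_pos _) (aux_pos φ θ)

lemma policy_sum' {Y : Type*} [Fintype Y] [Nonempty Y] {D : ℕ}
    (φ : Y → EuclideanSpace ℝ (Fin D)) (θ : EuclideanSpace ℝ (Fin D)) :
    ∑ y, policy φ θ y = 1 := by
  unfold policy
  rw [← Finset.sum_div]
  exact div_self (aux_pos φ θ).ne'

noncomputable def logPol {Y : Type*} [Fintype Y] {D : ℕ}
    (φ : Y → EuclideanSpace ℝ (Fin D)) (y : Y) (θ : EuclideanSpace ℝ (Fin D)) : ℝ :=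
  ⟪φ y, θ⟫ - Real.log (∑ z, Real.exp ⟪φ z, θ⟫)

lemma policy_eq' {Y : Type*} [Fintype Y] [Nonempty Y] {D : ℕ}
    (φ : Y → EuclideanSpace ℝ (Fin D)) (θ : EuclideanSpace ℝ (Fin D)) (y : Y) :
    policy φ θ y = Real.exp (logPol φ y θ) := by
  rw [logPol, Real.exp_sub, Real.exp_log (aux_pos φ θ), policy]

lemma norm_avg_le {Y : Type*} [Fintype Y] [Nonempty Y] {D : ℕ}
    (φ : Y → EuclideanSpace ℝ (Fin D)) (θ : EuclideanSpace ℝ (Fin D))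
    (v : Y → EuclideanSpace ℝ (Fin D)) (C : ℝ) (hv : ∀ y, ‖v y‖ ≤ C) :
    ‖∑ z, policy φ θ z • v z‖ ≤ C := by
  calc ‖∑ z, policy φ θ z • v z‖ ≤ ∑ z, policy φ θ z * C := by
        refine norm_sum_le_of_le _ fun z _ => ?_
        rw [norm_smul, Real.norm_of_nonneg (policy_pos' φ θ z).le]
        exact mul_le_mul_of_nonneg_left (hv z) (policy_pos' φ θ z).le
    _ = C := by rw [← Finset.sum_mul, policy_sum', one_mul]

lemma logPol_grad {Y : Type*} [Fintype Y] [Nonempty Y] {D : ℕ}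
    (φ : Y → EuclideanSpace ℝ (Fin D)) (θ : EuclideanSpace ℝ (Fin D)) (y : Y) :
    HasFDerivAt (logPol φ y) (innerSL ℝ (φ y - ∑ z, policy φ θ z • φ z)) θ := by
  have h1 : ∀ z, HasFDerivAt (fun θ => ⟪φ z, θ⟫) (innerSL ℝ (φ z)) θ :=
    fun z => (innerSL ℝ (φ z)).hasFDerivAt
  have h2 : HasFDerivAt (fun θ => ∑ z, Real.exp ⟪φ z, θ⟫)
      (∑ z, Real.exp ⟪φ z, θ⟫ • innerSL ℝ (φ z)) θ :=
    HasFDerivAt.fun_sum fun z _ => (h1 z).exp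
  refine ((h1 y).sub (h2.log (aux_pos φ θ).ne')).congr_fderiv ?_
  ext w
  simp [policy, inner_sub_left, sum_inner, inner_smul_left, Finset.mul_sum]
  refine Finset.sum_congr rfl fun z _ => ?_
  ring

lemma reward_grad {Y : Type*} [Fintype Y] [Nonempty Y] {D : ℕ}
    (φ : Y → EuclideanSpace ℝ (Fin D)) (r : Y → ℝ) (θ : EuclideanSpace ℝ (Fin D)) :
    gradient (expReward φ r) θ =
      ∑ y, policy φ θ y • (r y • (φ y - ∑ z, policy φ θ z • φ z)) := by
  have h : HasFDerivAt (expReward φ r)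
      (∑ y, r y • policy φ θ y • innerSL ℝ (φ y - ∑ z, policy φ θ z • φ z)) θ := by
    have : expReward φ r = fun θ => ∑ y, Real.exp (logPol φ y θ) * r y := by
      funext θ
      simp only [expReward, policy_eq']
    rw [this]
    refine HasFDerivAt.fun_sum fun y _ => ?_
    rw [policy_eq' φ θ y]
    exact (logPol_grad φ θ y).exp.mul_const (r y)
  refine HasGradientAt.gradient ?_
  rw [hasGradientAt_iff_hasFDerivAt]
  refine h.congr_fderiv ?_
  ext w
  simp only [InnerProductSpace.toDual_apply_apply, sum_inner, inner_smul_left,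
    ContinuousLinearMap.sum_apply, ContinuousLinearMap.smul_apply, innerSL_apply_apply, smul_eq_mul]
  refine Finset.sum_congr rfl fun z _ => ?_
  simp
  ring

theorem prob_growth_bound {Y : Type*} [Fintype Y] [Nonempty Y] {D : ℕ}
    (φ : Y → EuclideanSpace ℝ (Fin D)) (hφ : ∀ y, φ y ≠ 0)
    (r : Y → ℝ) (hr : ∀ y, r y ∈ Set.Icc (-1 : ℝ) 1)
    (Z : Finset Y)
    (B : ℝ) (hB : B = Finset.univ.sup' Finset.univ_nonempty fun y => ‖φ y‖)
    (θt : ℝ → EuclideanSpace ℝ (Fin D))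
    (hflow : ∀ t : ℝ, 0 ≤ t → HasDerivAt θt (gradient (expReward φ r) (θt t)) t)
    (t : ℝ) (ht : 0 ≤ t) :
    ∑ y ∈ Z, policy φ (θt t) y
      ≤ (∑ y ∈ Z, policy φ (θt 0) y) * Real.exp (4 * B ^ 2 * t) := by
  have hb : ∀ y, ‖φ y‖ ≤ B := fun y => by
    rw [hB]; exact Finset.le_sup' (fun y => ‖φ y‖) (Finset.mem_univ y)
  have hB0 : 0 ≤ B := (norm_nonneg _).trans (hb (Classical.arbitrary Y))
  have hc : ∀ θ y, ‖φ y - ∑ z, policy φ θ z • φ z‖ ≤ 2 * B := fun θ y =>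
    (norm_sub_le _ _).trans (by linarith [hb y, norm_avg_le φ θ φ B hb])
  have hg : ∀ θ, ‖gradient (expReward φ r) θ‖ ≤ 2 * B := fun θ => by
    rw [reward_grad]
    refine norm_avg_le φ θ _ _ fun y => ?_
    rw [norm_smul]
    have h1 : ‖r y‖ ≤ 1 := abs_le.2 (hr y)
    nlinarith [hc θ y, norm_nonneg (r y), norm_nonneg (φ y - ∑ z, policy φ θ z • φ z)]
  rw [Finset.sum_mul]
  refine Finset.sum_le_sum fun y _ => ?_
  rw [policy_eq', policy_eq', ← Real.exp_add, Real.exp_le_exp]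
  have hd : ∀ s, 0 ≤ s → HasDerivAt (fun s => logPol φ y (θt s) - 4 * B ^ 2 * s)
      (⟪φ y - ∑ z, policy φ (θt s) z • φ z, gradient (expReward φ r) (θt s)⟫
        - 4 * B ^ 2 * 1) s := fun s hs =>
    ((logPol_grad φ (θt s) y).comp_hasDerivAt s (hflow s hs)).sub
      ((hasDerivAt_id s).const_mul (4 * B ^ 2))
  have ha : AntitoneOn (fun s => logPol φ y (θt s) - 4 * B ^ 2 * s) (Set.Ici 0) := by
    refine antitoneOn_of_deriv_nonpos (convex_Ici 0)
      (fun s hs => (hd s hs).continuousAt.continuousWithinAt)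
      (fun s hs => (hd s (interior_subset hs)).differentiableAt.differentiableWithinAt) ?_
    intro s hs
    rw [(hd s (interior_subset hs)).deriv]
    have h1 := real_inner_le_norm (φ y - ∑ z, policy φ (θt s) z • φ z)
      (gradient (expReward φ r) (θt s))
    have h2 := mul_le_mul (hc (θt s) y) (hg (θt s)) (norm_nonneg _) (by linarith)
    nlinarith
  have := ha (Set.mem_Ici.2 le_rfl) (Set.mem_Ici.2 ht) ht
  simp only [mul_zero, sub_zero] at this
  linarith
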